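/- arXiv:math/0306352 — 3 statements merged into one kernel-verified Lean document; each statement's English description precedes it below -/
import Mathlib

section
/- Let H be an inner product space over 𝕜 (𝕜 = ℝ or ℂ) and let m, M > 0 be real numbers. If x, y ∈ H satisfy Re⟨M·y − x, x − m·y⟩ ≥ 0, then 0 ≤ ‖x‖²·‖y‖² − |⟨x,y⟩|² ≤ ‖x‖²·‖y‖² − (Re⟨x,y⟩)² ≤ (M − m)²/(4·m·M) · (Re⟨x,y⟩)² ≤ (M − m)²/(4·m·M) · |⟨x,y⟩|². -/
open RCLike

/-!
Expanding the hypothesis gives `‖x‖² + m M ‖y‖² ≤ (M + m) Re⟨x, y⟩`. The left side is at least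
`2 √(m M) ‖x‖ ‖y‖`, so squaring yields `4 m M ‖x‖² ‖y‖² ≤ (M + m)² (Re⟨x, y⟩)²`, and
`(M + m)² = (M - m)² + 4 m M` turns this into the bound on the difference.
-/

section Cassels

open scoped InnerProductSpace

variable {𝕜 H : Type*} [RCLike 𝕜] [SeminormedAddCommGroup H] [InnerProductSpace 𝕜 H]

theorem re_inner_smul_sub_sub_smul (m M : ℝ) (x y : H) :
    re ⟪(M : 𝕜) • y - x, x - (m : 𝕜) • y⟫_𝕜 =
      (M + m) * re ⟪y, x⟫_𝕜 - (‖x‖ ^ 2 + m * M * ‖y‖ ^ 2) := by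
  simp only [inner_sub_left, inner_sub_right, inner_smul_left, inner_smul_right, conj_ofReal,
    map_sub, re_ofReal_mul, inner_re_symm x y, ← norm_sq_eq_re_inner]
  ring

theorem four_mul_mul_norm_sq_mul_norm_sq_le {m M : ℝ} (hmM : 0 ≤ m * M) {x y : H}
    (h : 0 ≤ re ⟪(M : 𝕜) • y - x, x - (m : 𝕜) • y⟫_𝕜) :
    4 * m * M * (‖x‖ ^ 2 * ‖y‖ ^ 2) ≤ (M + m) ^ 2 * re ⟪y, x⟫_𝕜 ^ 2 := by
  rw [re_inner_smul_sub_sub_smul, sub_nonneg] at h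
  calc 4 * m * M * (‖x‖ ^ 2 * ‖y‖ ^ 2)
      = 4 * ‖x‖ ^ 2 * (m * M * ‖y‖ ^ 2) := by ring
    _ ≤ (‖x‖ ^ 2 + m * M * ‖y‖ ^ 2) ^ 2 := four_mul_le_sq_add _ _
    _ ≤ ((M + m) * re ⟪y, x⟫_𝕜) ^ 2 := by gcongr
    _ = (M + m) ^ 2 * re ⟪y, x⟫_𝕜 ^ 2 := mul_pow _ _ 2

theorem norm_sq_mul_norm_sq_sub_re_inner_sq_le {m M : ℝ} (hmM : 0 < m * M) {x y : H}
    (h : 0 ≤ re ⟪(M : 𝕜) • y - x, x - (m : 𝕜) • y⟫_𝕜) :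
    ‖x‖ ^ 2 * ‖y‖ ^ 2 - re ⟪y, x⟫_𝕜 ^ 2 ≤ (M - m) ^ 2 / (4 * m * M) * re ⟪y, x⟫_𝕜 ^ 2 := by
  rw [div_mul_eq_mul_div, le_div_iff₀ (by linarith)]
  linarith [four_mul_mul_norm_sq_mul_norm_sq_le hmM.le h]

theorem norm_inner_sq_le_norm_sq_mul_norm_sq (x y : H) :
    ‖⟪x, y⟫_𝕜‖ ^ 2 ≤ ‖x‖ ^ 2 * ‖y‖ ^ 2 := by
  rw [← mul_pow]
  gcongr
  exact norm_inner_le_norm x y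

theorem re_sq_le_norm_sq (z : 𝕜) : re z ^ 2 ≤ ‖z‖ ^ 2 :=
  sq_le_sq.mpr ((abs_re_le_norm z).trans_eq (abs_norm z).symm)

theorem cassels_inner_product_additive_squares_general (m M : ℝ) (hmM : 0 < m * M) (x y : H)
    (h : 0 ≤ re ⟪(M : 𝕜) • y - x, x - (m : 𝕜) • y⟫_𝕜) :
    0 ≤ ‖x‖ ^ 2 * ‖y‖ ^ 2 - ‖⟪y, x⟫_𝕜‖ ^ 2 ∧
      ‖x‖ ^ 2 * ‖y‖ ^ 2 - ‖⟪y, x⟫_𝕜‖ ^ 2 ≤ ‖x‖ ^ 2 * ‖y‖ ^ 2 - re ⟪y, x⟫_𝕜 ^ 2 ∧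
      ‖x‖ ^ 2 * ‖y‖ ^ 2 - re ⟪y, x⟫_𝕜 ^ 2 ≤ (M - m) ^ 2 / (4 * m * M) * re ⟪y, x⟫_𝕜 ^ 2 ∧
      (M - m) ^ 2 / (4 * m * M) * re ⟪y, x⟫_𝕜 ^ 2 ≤
        (M - m) ^ 2 / (4 * m * M) * ‖⟪y, x⟫_𝕜‖ ^ 2 := by
  have hcauchy : ‖⟪y, x⟫_𝕜‖ ^ 2 ≤ ‖x‖ ^ 2 * ‖y‖ ^ 2 :=
    (norm_inner_sq_le_norm_sq_mul_norm_sq y x).trans_eq (mul_comm _ _)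
  have hre : re ⟪y, x⟫_𝕜 ^ 2 ≤ ‖⟪y, x⟫_𝕜‖ ^ 2 := re_sq_le_norm_sq _
  have hcoeff : 0 ≤ (M - m) ^ 2 / (4 * m * M) := div_nonneg (sq_nonneg _) (by linarith)
  exact ⟨sub_nonneg.mpr hcauchy, sub_le_sub_left hre _,
    norm_sq_mul_norm_sq_sub_re_inner_sq_le hmM h, mul_le_mul_of_nonneg_left hre hcoeff⟩

end Cassels

/-- Corollary 2.3, inequality (2.9).  The inner product is Mathlib's
(conjugate-linear in the first variable), so the paper's `⟨x,y⟩` is written as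
`inner y x`. -/
theorem cassels_inner_product_additive_squares {𝕜 H : Type*} [RCLike 𝕜] [NormedAddCommGroup H]
    [InnerProductSpace 𝕜 H] (m M : ℝ) (hm : 0 < m) (hM : 0 < M) (x y : H)
    (h : 0 ≤ re (@inner 𝕜 _ _ ((M : 𝕜) • y - x) (x - (m : 𝕜) • y))) :
    0 ≤ ‖x‖ ^ 2 * ‖y‖ ^ 2 - ‖@inner 𝕜 _ _ y x‖ ^ 2 ∧
      ‖x‖ ^ 2 * ‖y‖ ^ 2 - ‖@inner 𝕜 _ _ y x‖ ^ 2 ≤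
        ‖x‖ ^ 2 * ‖y‖ ^ 2 - re (@inner 𝕜 _ _ y x) ^ 2 ∧
      ‖x‖ ^ 2 * ‖y‖ ^ 2 - re (@inner 𝕜 _ _ y x) ^ 2 ≤
        (M - m) ^ 2 / (4 * m * M) * re (@inner 𝕜 _ _ y x) ^ 2 ∧
      (M - m) ^ 2 / (4 * m * M) * re (@inner 𝕜 _ _ y x) ^ 2 ≤
        (M - m) ^ 2 / (4 * m * M) * ‖@inner 𝕜 _ _ y x‖ ^ 2 :=
  cassels_inner_product_additive_squares_general m M (mul_pos hm hM) x y h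
end

section
/- (Unweighted Cassels' inequality) Let n ≥ 1 and let a = (a₁,…,aₙ), b = (b₁,…,bₙ) be sequences of positive real numbers. Set m = min over i of aᵢ/bᵢ and M = max over i of aᵢ/bᵢ. Then (Σᵢ aᵢ²)·(Σᵢ bᵢ²) ≤ (m + M)²/(4·m·M) · (Σᵢ aᵢ·bᵢ)². -/
/-!
The quantity `(a i - m * b i) * (M * b i - a i)` is nonnegative because `a i / b i` lies between `m`
and `M`. Summing it gives `A + m * M * B ≤ (m + M) * C` for `A = ∑ a i ^ 2`, `B = ∑ b i ^ 2` and
`C = ∑ a i * b i`, and the arithmetic–geometric mean inequality bounds the left-hand side below by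
`2 * √(m * M * A * B)`.
-/

variable {ι : Type*}

theorem diaz_metcalf_inequality {R : Type*} [CommRing R] [PartialOrder R] [IsOrderedRing R]
    (s : Finset ι) {w a b : ι → R} {m M : R} (hw : ∀ i ∈ s, 0 ≤ w i)
    (hab : ∀ i ∈ s, 0 ≤ (a i - m * b i) * (M * b i - a i)) :
    ∑ i ∈ s, w i * a i ^ 2 + m * M * ∑ i ∈ s, w i * b i ^ 2 ≤
      (m + M) * ∑ i ∈ s, w i * (a i * b i) := by
  simp only [Finset.mul_sum, ← Finset.sum_add_distrib]
  refine Finset.sum_le_sum fun i hi => sub_nonneg.mp ?_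
  calc 0 ≤ w i * ((a i - m * b i) * (M * b i - a i)) := mul_nonneg (hw i hi) (hab i hi)
    _ = (m + M) * (w i * (a i * b i)) - (w i * a i ^ 2 + m * M * (w i * b i ^ 2)) := by ring

theorem unweighted_cassels_inequality_general {K : Type*} [Field K] [LinearOrder K]
    [IsStrictOrderedRing K] (s : Finset ι) {w a b : ι → K} {m M : K} (hmM : 0 < m * M)
    (hw : ∀ i ∈ s, 0 ≤ w i) (hab : ∀ i ∈ s, 0 ≤ (a i - m * b i) * (M * b i - a i)) :
    (∑ i ∈ s, w i * a i ^ 2) * (∑ i ∈ s, w i * b i ^ 2) ≤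
      (m + M) ^ 2 / (4 * m * M) * (∑ i ∈ s, w i * (a i * b i)) ^ 2 := by
  have weighted_sq_nonneg (f : ι → K) : 0 ≤ ∑ i ∈ s, w i * f i ^ 2 :=
    Finset.sum_nonneg fun i hi => mul_nonneg (hw i hi) (sq_nonneg (f i))
  have hA := weighted_sq_nonneg a
  have hB := weighted_sq_nonneg b
  have diaz_metcalf := diaz_metcalf_inequality s hw hab
  set A := ∑ i ∈ s, w i * a i ^ 2
  set B := ∑ i ∈ s, w i * b i ^ 2
  set C := ∑ i ∈ s, w i * (a i * b i)
  rw [div_mul_eq_mul_div, mul_assoc 4 m M, le_div_iff₀ (mul_pos four_pos hmM)]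
  calc A * B * (4 * (m * M)) = 4 * A * (m * M * B) := by ring
    _ ≤ (A + m * M * B) ^ 2 := four_mul_le_sq_add A (m * M * B)
    _ ≤ ((m + M) * C) ^ 2 := by gcongr
    _ = (m + M) ^ 2 * C ^ 2 := mul_pow _ _ 2

theorem iInf_mul_iSup_pos {R : Type*} [ConditionallyCompleteLinearOrder R] [MulZeroClass R]
    [PosMulStrictMono R] [Finite ι] [Nonempty ι] {f : ι → R} (hf : ∀ i, 0 < f i) :
    0 < (⨅ i, f i) * ⨆ i, f i := by
  obtain ⟨i, hi⟩ := exists_eq_ciInf_of_finite (f := f)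
  obtain ⟨j, hj⟩ := exists_eq_ciSup_of_finite (f := f)
  rw [← hi, ← hj]
  exact mul_pos (hf i) (hf j)

theorem sub_iInf_div_mul_mul_iSup_div_mul_sub_nonneg {a b : ι → ℝ}
    (hbelow : BddBelow (Set.range fun i => a i / b i))
    (habove : BddAbove (Set.range fun i => a i / b i)) {i : ι} (hb : b i ≠ 0) :
    0 ≤ (a i - (⨅ j, a j / b j) * b i) * ((⨆ j, a j / b j) * b i - a i) := by
  have hinf : 0 ≤ a i / b i - ⨅ j, a j / b j := sub_nonneg.mpr (ciInf_le hbelow i)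
  have hsup : 0 ≤ (⨆ j, a j / b j) - a i / b i := sub_nonneg.mpr (le_ciSup habove i)
  calc 0 ≤ (a i / b i - ⨅ j, a j / b j) * ((⨆ j, a j / b j) - a i / b i) * b i ^ 2 := by positivity
    _ = _ := by field_simp

/-- Inequality (1.4) (unweighted Cassels' inequality). -/
theorem unweighted_cassels_inequality (n : ℕ) (hn : 1 ≤ n) (a b : Fin n → ℝ)
    (ha : ∀ i, 0 < a i) (hb : ∀ i, 0 < b i)
    (m M : ℝ) (hm : m = ⨅ i, a i / b i) (hM : M = ⨆ i, a i / b i) :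
    (∑ i, a i ^ 2) * (∑ i, b i ^ 2) ≤
      (m + M) ^ 2 / (4 * m * M) * (∑ i, a i * b i) ^ 2 := by
  subst hm hM
  have : Nonempty (Fin n) := ⟨⟨0, hn⟩⟩
  simpa only [one_mul] using unweighted_cassels_inequality_general Finset.univ (w := fun _ => 1)
    (iInf_mul_iSup_pos fun i => div_pos (ha i) (hb i)) (fun _ _ => zero_le_one)
    fun i _ => sub_iInf_div_mul_mul_iSup_div_mul_sub_nonneg
      (Set.finite_range _).bddBelow (Set.finite_range _).bddAbove (hb i).ne'
end

section
/- Let (Ω, Σ, μ) be a measure space, ρ : Ω → [0, ∞) measurable, and 𝕜 = ℝ or ℂ. Let m, M > 0 be real numbers, and let f, g : Ω → 𝕜 be measurable with ∫ ρ(s)·|f(s)|² dμ(s) < ∞ and ∫ ρ(s)·|g(s)|² dμ(s) < ∞. If ∫ ρ(s)·Re[(M·g(s) − f(s))·(conj(f(s)) − m·conj(g(s)))] dμ(s) ≥ 0, then 0 ≤ (∫ ρ·|f|² dμ · ∫ ρ·|g|² dμ)^(1/2) − ∫ ρ(s)·Re[f(s)·conj(g(s))] dμ(s) ≤ (√M −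 √m)²/(2√(m·M)) · ∫ ρ(s)·Re[f(s)·conj(g(s))] dμ(s). -/
open RCLike ComplexConjugate MeasureTheory

/- The inequality holds in every inner product space: expanding
`0 ≤ re ⟪x - m • y, M • y - x⟫` gives `‖x‖² + m M ‖y‖² ≤ (m + M) re ⟪x, y⟫`, and by AM-GM the
left-hand side is at least `2 √(m M) ‖x‖ ‖y‖`. The weighted integrals are the inner product and
the squared norms in `L²(ρ μ)`. -/

section InnerProductSpace

variable {𝕜 E : Type*} [RCLike 𝕜] [SeminormedAddCommGroup E] [InnerProductSpace 𝕜 E]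

theorem re_inner_sub_smul_smul_sub (m M : ℝ) (x y : E) :
    re (inner 𝕜 (x - (m : 𝕜) • y) ((M : 𝕜) • y - x)) =
      (m + M) * re (inner 𝕜 x y) - (‖x‖ ^ 2 + m * M * ‖y‖ ^ 2) := by
  simp only [inner_sub_left, inner_sub_right, inner_smul_left, inner_smul_right, conj_ofReal,
    map_sub, re_ofReal_mul, inner_self_eq_norm_sq, inner_re_symm y x]
  ring

theorem two_mul_sqrt_mul_norm_mul_norm_le {m M : ℝ} (hmM : 0 ≤ m * M) {x y : E}
    (h : 0 ≤ re (inner 𝕜 (x - (m : 𝕜) • y) ((M : 𝕜) • y - x))) :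
    2 * √(m * M) * (‖x‖ * ‖y‖) ≤ (m + M) * re (inner 𝕜 x y) := by
  rw [re_inner_sub_smul_smul_sub, sub_nonneg] at h
  calc 2 * √(m * M) * (‖x‖ * ‖y‖) = 2 * ‖x‖ * (√(m * M) * ‖y‖) := by ring
    _ ≤ ‖x‖ ^ 2 + (√(m * M) * ‖y‖) ^ 2 := two_mul_le_add_sq _ _
    _ = ‖x‖ ^ 2 + m * M * ‖y‖ ^ 2 := by rw [mul_pow, Real.sq_sqrt hmM]
    _ ≤ (m + M) * re (inner 𝕜 x y) := h

theorem norm_mul_norm_sub_re_inner_le {m M : ℝ} (hm : 0 < m) (hM : 0 < M) {x y : E}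
    (h : 0 ≤ re (inner 𝕜 (x - (m : 𝕜) • y) ((M : 𝕜) • y - x))) :
    ‖x‖ * ‖y‖ - re (inner 𝕜 x y) ≤
      (√M - √m) ^ 2 / (2 * √(m * M)) * re (inner 𝕜 x y) := by
  have sq_sub_sqrt : (√M - √m) ^ 2 = m + M - 2 * √(m * M) := by
    rw [sub_sq, Real.sq_sqrt hM.le, Real.sq_sqrt hm.le, Real.sqrt_mul hm.le]
    ring
  rw [sq_sub_sqrt, div_mul_eq_mul_div, le_div_iff₀ (by positivity)]
  linarith [two_mul_sqrt_mul_norm_mul_norm_le (mul_pos hm hM).le h]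

end InnerProductSpace

section L2

variable {Ω E : Type*} [NormedAddCommGroup E] [MeasurableSpace Ω] {μ : Measure Ω} {f g : Ω → E}

theorem norm_toLp_two_sq (hf : MemLp f 2 μ) : ‖hf.toLp‖ ^ 2 = ∫ s, ‖f s‖ ^ 2 ∂μ := by
  have h_nonneg : 0 ≤ ∫ s, ‖f s‖ ^ 2 ∂μ := integral_nonneg fun _ => sq_nonneg _
  rw [Lp.norm_toLp, hf.eLpNorm_eq_integral_rpow_norm two_ne_zero ENNReal.ofNat_ne_top]
  simp only [ENNReal.toReal_ofNat, Real.rpow_ofNat]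
  rw [ENNReal.toReal_ofReal (by positivity), ← Real.rpow_natCast,
    Nat.cast_ofNat, Real.rpow_inv_rpow h_nonneg two_ne_zero]

theorem norm_toLp_mul_norm_toLp (hf : MemLp f 2 μ) (hg : MemLp g 2 μ) :
    ‖hf.toLp‖ * ‖hg.toLp‖ = √((∫ s, ‖f s‖ ^ 2 ∂μ) * ∫ s, ‖g s‖ ^ 2 ∂μ) := by
  rw [← norm_toLp_two_sq hf, ← norm_toLp_two_sq hg, ← mul_pow, Real.sqrt_sq (by positivity)]

variable {𝕜 : Type*} [RCLike 𝕜] [InnerProductSpace 𝕜 E]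

theorem re_inner_toLp_toLp (hf : MemLp f 2 μ) (hg : MemLp g 2 μ) :
    re (inner 𝕜 hf.toLp hg.toLp) = ∫ s, re (inner 𝕜 (f s) (g s)) ∂μ := by
  rw [L2.inner_def, ← integral_re (L2.integrable_inner _ _)]
  refine integral_congr_ae ?_
  filter_upwards [hf.coeFn_toLp, hg.coeFn_toLp] with s hfs hgs
  rw [hfs, hgs]

theorem integral_re_inner_le_sqrt_integral_mul_integral (hf : MemLp f 2 μ) (hg : MemLp g 2 μ) :
    ∫ s, re (inner 𝕜 (f s) (g s)) ∂μ ≤ √((∫ s, ‖f s‖ ^ 2 ∂μ) * ∫ s, ‖g s‖ ^ 2 ∂μ) := by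
  rw [← re_inner_toLp_toLp hf hg, ← norm_toLp_mul_norm_toLp hf hg]
  exact re_inner_le_norm _ _

theorem sqrt_integral_mul_integral_sub_integral_re_inner_le {m M : ℝ} (hm : 0 < m) (hM : 0 < M)
    (hf : MemLp f 2 μ) (hg : MemLp g 2 μ)
    (h : 0 ≤ ∫ s, re (inner 𝕜 (f s - (m : 𝕜) • g s) ((M : 𝕜) • g s - f s)) ∂μ) :
    √((∫ s, ‖f s‖ ^ 2 ∂μ) * ∫ s, ‖g s‖ ^ 2 ∂μ) - ∫ s, re (inner 𝕜 (f s) (g s)) ∂μ ≤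
      (√M - √m) ^ 2 / (2 * √(m * M)) * ∫ s, re (inner 𝕜 (f s) (g s)) ∂μ := by
  rw [← re_inner_toLp_toLp hf hg, ← norm_toLp_mul_norm_toLp hf hg]
  refine norm_mul_norm_sub_re_inner_le hm hM ?_
  exact h.trans_eq (re_inner_toLp_toLp (hf.sub (hg.const_smul (m : 𝕜)))
    ((hg.const_smul (M : 𝕜)).sub hf)).symm

end L2

section Weight

variable {Ω E : Type*} [NormedAddCommGroup E] [MeasurableSpace Ω] {μ : Measure Ω} {ρ : Ω → ℝ}

theorem integral_withDensity_ofReal [NormedSpace ℝ E] (hρm : AEMeasurable ρ μ) (hρ : 0 ≤ᵐ[μ] ρ)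
    (u : Ω → E) :
    ∫ s, u s ∂μ.withDensity (fun s => ENNReal.ofReal (ρ s)) = ∫ s, ρ s • u s ∂μ := by
  rw [integral_withDensity_eq_integral_toReal_smul₀ hρm.ennreal_ofReal (by simp)]
  refine integral_congr_ae ?_
  filter_upwards [hρ] with s hs
  rw [ENNReal.toReal_ofReal hs]

theorem integrable_withDensity_ofReal_iff [NormedSpace ℝ E] (hρm : AEMeasurable ρ μ)
    (hρ : 0 ≤ᵐ[μ] ρ) {u : Ω → E} :
    Integrable u (μ.withDensity fun s => ENNReal.ofReal (ρ s)) ↔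
      Integrable (fun s => ρ s • u s) μ := by
  rw [integrable_withDensity_iff_integrable_smul₀' hρm.ennreal_ofReal (by simp)]
  refine integrable_congr ?_
  filter_upwards [hρ] with s hs
  rw [ENNReal.toReal_ofReal hs]

theorem memLp_two_withDensity_ofReal (hρm : AEMeasurable ρ μ) (hρ : 0 ≤ᵐ[μ] ρ) {f : Ω → E}
    (hfm : AEStronglyMeasurable f μ)
    (hf2 : Integrable (fun s => ρ s * ‖f s‖ ^ 2) μ) :
    MemLp f 2 (μ.withDensity fun s => ENNReal.ofReal (ρ s)) :=
  (memLp_two_iff_integrable_sq_norm (hfm.mono_ac (withDensity_absolutelyContinuous _ _))).2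
    ((integrable_withDensity_ofReal_iff hρm hρ).2 hf2)

end Weight

theorem weighted_integral_cassels_additive_general {𝕜 Ω E : Type*} [RCLike 𝕜]
    [NormedAddCommGroup E] [InnerProductSpace 𝕜 E] [MeasurableSpace Ω]
    (μ : Measure Ω) (ρ : Ω → ℝ) (hρm : AEMeasurable ρ μ) (hρ : 0 ≤ᵐ[μ] ρ)
    (m M : ℝ) (hm : 0 < m) (hM : 0 < M)
    (f g : Ω → E) (hfm : AEStronglyMeasurable f μ) (hgm : AEStronglyMeasurable g μ)
    (hf2 : Integrable (fun s => ρ s * ‖f s‖ ^ 2) μ)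
    (hg2 : Integrable (fun s => ρ s * ‖g s‖ ^ 2) μ)
    (h : 0 ≤ ∫ s, ρ s * re (inner 𝕜 (f s - (m : 𝕜) • g s) ((M : 𝕜) • g s - f s)) ∂μ) :
    0 ≤ √((∫ s, ρ s * ‖f s‖ ^ 2 ∂μ) * (∫ s, ρ s * ‖g s‖ ^ 2 ∂μ)) -
        ∫ s, ρ s * re (inner 𝕜 (f s) (g s)) ∂μ ∧
      √((∫ s, ρ s * ‖f s‖ ^ 2 ∂μ) * (∫ s, ρ s * ‖g s‖ ^ 2 ∂μ)) -
          (∫ s, ρ s * re (inner 𝕜 (f s) (g s)) ∂μ) ≤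
        (√M - √m) ^ 2 / (2 * √(m * M)) * ∫ s, ρ s * re (inner 𝕜 (f s) (g s)) ∂μ := by
  have hf := memLp_two_withDensity_ofReal hρm hρ hfm hf2
  have hg := memLp_two_withDensity_ofReal hρm hρ hgm hg2
  have integral_weight (u : Ω → ℝ) : ∫ s, ρ s * u s ∂μ =
      ∫ s, u s ∂μ.withDensity (fun s => ENNReal.ofReal (ρ s)) :=
    (integral_withDensity_ofReal hρm hρ u).symm
  simp only [integral_weight] at h ⊢
  exact ⟨sub_nonneg.2 (integral_re_inner_le_sqrt_integral_mul_integral hf hg),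
    sqrt_integral_mul_integral_sub_integral_re_inner_le hm hM hf hg h⟩

/-- Corollary 4.6, inequality (4.9). -/
theorem weighted_integral_cassels_additive {𝕜 Ω : Type*} [RCLike 𝕜] [MeasurableSpace Ω]
    (μ : Measure Ω) (ρ : Ω → ℝ) (hρm : Measurable ρ) (hρ : ∀ s, 0 ≤ ρ s)
    (m M : ℝ) (hm : 0 < m) (hM : 0 < M)
    (f g : Ω → 𝕜) (hfm : Measurable f) (hgm : Measurable g)
    (hf2 : Integrable (fun s => ρ s * ‖f s‖ ^ 2) μ)
    (hg2 : Integrable (fun s => ρ s * ‖g s‖ ^ 2) μ)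
    (h : 0 ≤ ∫ s, ρ s * re (((M : 𝕜) * g s - f s) * (conj (f s) - (m : 𝕜) * conj (g s))) ∂μ) :
    0 ≤ Real.sqrt ((∫ s, ρ s * ‖f s‖ ^ 2 ∂μ) * (∫ s, ρ s * ‖g s‖ ^ 2 ∂μ)) -
        ∫ s, ρ s * re (f s * conj (g s)) ∂μ ∧
      Real.sqrt ((∫ s, ρ s * ‖f s‖ ^ 2 ∂μ) * (∫ s, ρ s * ‖g s‖ ^ 2 ∂μ)) -
          (∫ s, ρ s * re (f s * conj (g s)) ∂μ) ≤
        (Real.sqrt M - Real.sqrt m) ^ 2 / (2 * Real.sqrt (m * M)) *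
          ∫ s, ρ s * re (f s * conj (g s)) ∂μ := by
  simpa [inner_apply, mul_comm] using weighted_integral_cassels_additive_general (𝕜 := 𝕜)
    μ ρ hρm.aemeasurable (ae_of_all μ hρ) m M hm hM f g hfm.aestronglyMeasurable
    hgm.aestronglyMeasurable hf2 hg2 (by simpa [inner_apply] using h)
end
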